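/- For every real number p > 0 and all real numbers a, b, the identity (2/π) · ∫₀^∞ ∫₀^∞ sin(xy) sin(ax) sin(by) / (cosh(p x) · cosh(π y/p)) dx dy = √2 · sinh(π a/(2p)) sinh(p b/2) / (cosh(π a/p) cosh(p b)) − sin(ab) / (cosh(π a/p) cosh(p b)) holds. -/

import Mathlib

/-!
The integrand is even in each variable, so both integrals may be taken over the whole line.

For fixed `x` the `y`-integral is a Fourier transform of `sech`: writing `sin (x y) sin (b y)` as
a difference of cosines gives a multiple of `sech (p (x - b) / 2) - sech (p (x + b) / 2)`
(`inner_integral`). In the remaining `x`-integral the product of this difference with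
`sech (p x)` splits by `partial_fractions` (with `u = p x / 2`, `v = p b / 2`) into
`sinh (p x / 2) / cosh (p x)` and shifted copies of `sech`, whose sine transforms are elementary.

All the transforms come from `∫ exp (z t) / cosh t = π / cos (π z / 2)` for `|Re z| < 1`
(`exp_div_cosh`), taken at `z = i c` and `z = 1/2 + i c`. That formula is the reflection
formula for the Gamma function: the logistic substitution turns the Beta integral
`B ((1 + z) / 2, (1 - z) / 2)` into it.
-/

open Real MeasureTheory

lemma exp_cpow (r : ℝ) (w : ℂ) : ((rexp r : ℝ) : ℂ) ^ w = Complex.exp (r * w) := by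
  rw [Complex.cpow_def_of_ne_zero (by exact_mod_cast (exp_pos r).ne'), ← Complex.ofReal_log (exp_pos r).le,
    Real.log_exp]

lemma sigmoid_eq (t : ℝ) : Real.sigmoid t = rexp (t / 2 - Real.log (2 * Real.cosh (t / 2))) := by
  have hc : 0 < 2 * Real.cosh (t / 2) := by have := Real.cosh_pos (t / 2); positivity
  rw [Real.exp_sub, Real.exp_log hc, Real.sigmoid_def, inv_eq_one_div,
    div_eq_div_iff (by positivity) hc.ne', Real.cosh_eq]
  have : rexp (-t) = rexp (-(t/2)) * rexp (-(t/2)) := by rw [← Real.exp_add]; ring_nf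
  have h2 : rexp (t/2) * rexp (-(t/2)) = 1 := by rw [← Real.exp_add]; simp
  rw [this]
  linear_combination (-rexp (-(t/2))) * h2

/-- The integrand of `B ((1 + z) / 2, (1 - z) / 2)` pulled back along the sigmoid, whose derivative
is `sigmoid * (1 - sigmoid)`. The half-argument `2⁻¹ * t` is removed later by rescaling. -/
lemma beta_integrand (z : ℂ) (t : ℝ) :
    |Real.sigmoid t * (1 - Real.sigmoid t)| •
      (((Real.sigmoid t : ℝ) : ℂ) ^ ((1 + z) / 2 - 1) *
        (1 - ((Real.sigmoid t : ℝ) : ℂ)) ^ ((1 - z) / 2 - 1)) =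
      (1 / 2 : ℂ) * (Complex.exp (z * ((2⁻¹ * t : ℝ) : ℂ)) / (Real.cosh (2⁻¹ * t) : ℂ)) := by
  have hc : 0 < 2 * Real.cosh (t / 2) := by have := Real.cosh_pos (t / 2); positivity
  have h1 : 1 - Real.sigmoid t = rexp (-t / 2 - Real.log (2 * Real.cosh (t / 2))) := by
    rw [← Real.sigmoid_neg, sigmoid_eq, neg_div, Real.cosh_neg]
  have h1' : (1 - ((Real.sigmoid t : ℝ) : ℂ))
      = ((rexp (-t / 2 - Real.log (2 * Real.cosh (t / 2))) : ℝ) : ℂ) := by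
    rw [← h1, Complex.ofReal_sub, Complex.ofReal_one]
  rw [h1', h1, sigmoid_eq, exp_cpow, exp_cpow, abs_of_pos (by positivity), ← Real.exp_add,
    Complex.real_smul, Complex.ofReal_exp, ← Complex.exp_add, ← Complex.exp_add]
  have h3 : (Real.cosh (2⁻¹ * t) : ℂ) = Complex.exp (Real.log (2 * Real.cosh (t / 2))) / 2 := by
    rw [← Complex.ofReal_exp, Real.exp_log hc]; push_cast; ring_nf
  rw [h3, div_div_eq_mul_div, mul_div_assoc', ← mul_assoc, mul_comm (1/2 : ℂ), mul_assoc]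
  norm_num
  rw [← Complex.exp_sub]
  congr 1
  ring

/-- The two-sided Laplace transform of `sech`, from the Beta integral and the reflection formula. -/
lemma exp_div_cosh {z : ℂ} (h1 : -1 < z.re) (h2 : z.re < 1) :
    Integrable (fun t : ℝ => Complex.exp (z * t) / (Real.cosh t : ℂ)) ∧
    ∫ t : ℝ, Complex.exp (z * t) / (Real.cosh t : ℂ) = π / Complex.cos (π * z / 2) := by
  have hu : 0 < ((1 + z) / 2).re := by simp; linarith
  have hv : 0 < ((1 - z) / 2).re := by simp; linarith
  have hsum : (1 + z) / 2 + (1 - z) / 2 = 1 := by ring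
  have himg : Real.sigmoid '' Set.univ = Set.Ioo 0 1 := by
    rw [Set.image_univ, Real.range_sigmoid]
  have hd : ∀ x ∈ (Set.univ : Set ℝ), HasDerivWithinAt Real.sigmoid
      (Real.sigmoid x * (1 - Real.sigmoid x)) Set.univ x :=
    fun x _ => (Real.hasDerivAt_sigmoid x).hasDerivWithinAt
  have hconv := Complex.betaIntegral_convergent hu hv
  rw [intervalIntegrable_iff_integrableOn_Ioo_of_le zero_le_one, ← himg,
    integrableOn_image_iff_integrableOn_abs_deriv_smul MeasurableSet.univ hd
      Real.sigmoid_injective.injOn] at hconv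
  simp only [beta_integrand, integrableOn_univ] at hconv
  have hval := Complex.Gamma_mul_Gamma_eq_betaIntegral hu hv
  rw [hsum, Complex.Gamma_one, one_mul, Complex.betaIntegral,
    intervalIntegral.integral_of_le zero_le_one, integral_Ioc_eq_integral_Ioo, ← himg,
    integral_image_eq_integral_abs_deriv_smul MeasurableSet.univ hd
      Real.sigmoid_injective.injOn] at hval
  simp only [beta_integrand, setIntegral_univ] at hval
  rw [integral_const_mul, Measure.integral_comp_mul_left
    (fun t : ℝ => Complex.exp (z * t) / (Real.cosh t : ℂ)),
    show (1 - z) / 2 = 1 - (1 + z) / 2 by ring, Complex.Gamma_mul_Gamma_one_sub,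
    show (π : ℂ) * ((1 + z) / 2) = π * z / 2 + π / 2 by ring, Complex.sin_add_pi_div_two] at hval
  constructor
  · have h := hconv.const_mul 2
    rw [← integrable_comp_mul_left_iff _ (show (2⁻¹ : ℝ) ≠ 0 by norm_num)]
    convert h using 2 with t
    ring
  · rw [hval]
    simp

lemma cosh_div_cosh {z : ℂ} (h1 : -1 < z.re) (h2 : z.re < 1) :
    Integrable (fun t : ℝ => Complex.cosh (z * t) / (Real.cosh t : ℂ)) ∧
    ∫ t : ℝ, Complex.cosh (z * t) / (Real.cosh t : ℂ) = π / Complex.cos (π * z / 2) := by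
  obtain ⟨i1, e1⟩ := exp_div_cosh h1 h2
  obtain ⟨i2, e2⟩ := exp_div_cosh (z := -z) (by simpa using h2) (by simp; linarith)
  have h : (fun t : ℝ => Complex.cosh (z * t) / (Real.cosh t : ℂ)) = fun t : ℝ =>
      (1 / 2 : ℂ) * (Complex.exp (z * t) / (Real.cosh t : ℂ) +
        Complex.exp (-z * t) / (Real.cosh t : ℂ)) := by
    funext t
    rw [Complex.cosh, neg_mul]; ring
  rw [h]
  refine ⟨(i1.add i2).const_mul _, ?_⟩
  rw [integral_const_mul, integral_add i1 i2, e1, e2,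
    show (π : ℂ) * -z / 2 = -(π * z / 2) by ring, Complex.cos_neg]
  ring

lemma cos_div_cosh (c : ℝ) :
    Integrable (fun t : ℝ => Real.cos (c * t) / Real.cosh t) ∧
    ∫ t : ℝ, Real.cos (c * t) / Real.cosh t = π / Real.cosh (π * c / 2) := by
  obtain ⟨i, e⟩ := cosh_div_cosh (z := c * Complex.I) (by simp) (by simp)
  have h : ∀ t : ℝ, Complex.cosh (c * Complex.I * t) / (Real.cosh t : ℂ)
      = ((Real.cos (c * t) / Real.cosh t : ℝ) : ℂ) := by
    intro t
    rw [show (c : ℂ) * Complex.I * t = ((c * t : ℝ) : ℂ) * Complex.I by push_cast; ring,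
      Complex.cosh_mul_I]
    push_cast; rfl
  simp only [h] at i e
  refine ⟨i.re, ?_⟩
  rw [integral_complex_ofReal, show (π : ℂ) * (c * Complex.I) / 2 = ((π * c / 2 : ℝ) : ℂ) * Complex.I
    by push_cast; ring, Complex.cos_mul_I] at e
  exact_mod_cast e

/-- Imaginary part of `exp_div_cosh` at `z = i c`, multiplied by the phase `exp (i c d)`. -/
lemma sin_shift_div_cosh (c d : ℝ) :
    Integrable (fun t : ℝ => Real.sin (c * (t + d)) / Real.cosh t) ∧
    ∫ t : ℝ, Real.sin (c * (t + d)) / Real.cosh t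
      = π * Real.sin (c * d) / Real.cosh (π * c / 2) := by
  obtain ⟨i, e⟩ := exp_div_cosh (z := c * Complex.I) (by simp) (by simp)
  have i' := i.const_mul (Complex.exp ((c * d : ℝ) * Complex.I))
  have h : ∀ t : ℝ, (Complex.exp ((c * d : ℝ) * Complex.I) *
      (Complex.exp (c * Complex.I * t) / (Real.cosh t : ℂ))).im
      = Real.sin (c * (t + d)) / Real.cosh t := by
    intro t
    rw [← mul_div_assoc, ← Complex.exp_add, Complex.div_ofReal_im,
      show ((c * d : ℝ) : ℂ) * Complex.I + c * Complex.I * t = ((c * (t + d) : ℝ) : ℂ) * Complex.I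
        by push_cast; ring, Complex.exp_ofReal_mul_I_im]
  have i2 := i'.im
  have e2 := integral_im i'
  simp only [RCLike.im_to_complex, h] at i2 e2
  refine ⟨i2, ?_⟩
  rw [e2, integral_const_mul, e, show (π : ℂ) * (c * Complex.I) / 2 = ((π * c / 2 : ℝ) : ℂ) * Complex.I
    by push_cast; ring, Complex.cos_mul_I, ← Complex.ofReal_cosh, ← mul_div_assoc,
    Complex.div_ofReal_im, Complex.im_mul_ofReal, Complex.exp_ofReal_mul_I_im]
  ring

/-- Imaginary part of `cosh_div_cosh` at `z = 1/2 + i c`. -/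
lemma sin_mul_sinh_div_cosh (c : ℝ) :
    Integrable (fun t : ℝ => Real.sin (c * t) * Real.sinh (t / 2) / Real.cosh t) ∧
    ∫ t : ℝ, Real.sin (c * t) * Real.sinh (t / 2) / Real.cosh t
      = π * √2 * Real.sinh (π * c / 2) / Real.cosh (π * c) := by
  obtain ⟨i, e⟩ := cosh_div_cosh (z := 1 / 2 + c * Complex.I) (by norm_num) (by norm_num)
  have h : ∀ t : ℝ, (Complex.cosh ((1 / 2 + c * Complex.I) * t) / (Real.cosh t : ℂ)).im
      = Real.sin (c * t) * Real.sinh (t / 2) / Real.cosh t := by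
    intro t
    rw [show (1 / 2 + c * Complex.I) * t = ((t / 2 : ℝ) : ℂ) + ((c * t : ℝ) : ℂ) * Complex.I by
      push_cast; ring, Complex.cosh_add, Complex.cosh_mul_I, Complex.sinh_mul_I,
      Complex.div_ofReal_im, ← Complex.ofReal_cosh, ← Complex.ofReal_sinh, ← Complex.ofReal_cos,
      ← Complex.ofReal_sin, ← mul_assoc, ← Complex.ofReal_mul, ← Complex.ofReal_mul]
    simp only [Complex.add_im, Complex.ofReal_im, Complex.I_im,
      Complex.ofReal_mul, Complex.mul_im, Complex.mul_re, Complex.ofReal_re, Complex.I_re]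
    ring
  have i2 := i.im
  have e2 := integral_im i
  simp only [RCLike.im_to_complex, h] at i2 e2
  refine ⟨i2, ?_⟩
  set w := π * c / 2 with hw
  -- The real and imaginary parts of the denominator, by `cos (π / 4) = sin (π / 4) = √2 / 2`.
  have hcos : Complex.cos (π * (1 / 2 + c * Complex.I) / 2)
      = ((√2 / 2 * Real.cosh w : ℝ) : ℂ) - ((√2 / 2 * Real.sinh w : ℝ) : ℂ) * Complex.I := by
    rw [show (π : ℂ) * (1 / 2 + c * Complex.I) / 2 = ((π / 4 : ℝ) : ℂ) + (w : ℂ) * Complex.I by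
      rw [hw]; push_cast; ring, Complex.cos_add_mul_I, ← Complex.ofReal_cos, ← Complex.ofReal_sin,
      Real.cos_pi_div_four, Real.sin_pi_div_four]
    push_cast; ring
  have h2w : Real.cosh (π * c) = Real.cosh w ^ 2 + Real.sinh w ^ 2 := by
    rw [← Real.cosh_two_mul, hw]; ring_nf
  have hn : Complex.normSq (((√2 / 2 * Real.cosh w : ℝ) : ℂ)
      - ((√2 / 2 * Real.sinh w : ℝ) : ℂ) * Complex.I) = Real.cosh (π * c) / 2 := by
    have hs : √2 * √2 = 2 := Real.mul_self_sqrt (by norm_num)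
    rw [Complex.normSq_apply, h2w]
    simp only [Complex.sub_re, Complex.sub_im, Complex.ofReal_re, Complex.ofReal_im,
      Complex.mul_re, Complex.mul_im, Complex.I_re, Complex.I_im]
    linear_combination (Real.cosh w ^ 2 + Real.sinh w ^ 2) / 4 * hs
  rw [e2, e, hcos, Complex.div_im, hn]
  simp only [Complex.sub_re, Complex.sub_im, Complex.ofReal_re, Complex.ofReal_im,
      Complex.mul_re, Complex.mul_im, Complex.I_re, Complex.I_im]
  have := (Real.cosh_pos (π * c)).ne'
  field_simp
  ring

lemma cos_div_cosh_scaled {p : ℝ} (hp : 0 < p) (c : ℝ) :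
    Integrable (fun y : ℝ => Real.cos (c * y) / Real.cosh (π * y / p)) ∧
    ∫ y : ℝ, Real.cos (c * y) / Real.cosh (π * y / p) = p / Real.cosh (p * c / 2) := by
  obtain ⟨i, e⟩ := cos_div_cosh (c * p / π)
  have hpi := Real.pi_pos
  have h : (fun y : ℝ => Real.cos (c * y) / Real.cosh (π * y / p)) = fun y : ℝ =>
      (fun t : ℝ => Real.cos (c * p / π * t) / Real.cosh t) (π / p * y) := by
    funext y
    simp only
    congr 2 <;> field_simp
  rw [h]
  refine ⟨i.comp_mul_left' (by positivity), ?_⟩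
  rw [Measure.integral_comp_mul_left (fun t : ℝ => Real.cos (c * p / π * t) / Real.cosh t), e,
    abs_of_pos (by positivity), smul_eq_mul,
    show π * (c * p / π) / 2 = p * c / 2 by field_simp]
  field_simp

lemma sin_mul_sinh_div_cosh_scaled {p : ℝ} (hp : 0 < p) (a : ℝ) :
    Integrable (fun x : ℝ => Real.sin (a * x) * Real.sinh (p * x / 2) / Real.cosh (p * x)) ∧
    ∫ x : ℝ, Real.sin (a * x) * Real.sinh (p * x / 2) / Real.cosh (p * x)
      = π * √2 * Real.sinh (π * a / (2 * p)) / Real.cosh (π * a / p) / p := by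
  obtain ⟨i, e⟩ := sin_mul_sinh_div_cosh (a / p)
  have h : (fun x : ℝ => Real.sin (a * x) * Real.sinh (p * x / 2) / Real.cosh (p * x)) =
      fun x : ℝ =>
      (fun t : ℝ => Real.sin (a / p * t) * Real.sinh (t / 2) / Real.cosh t) (p * x) := by
    funext x
    simp only
    rw [show a / p * (p * x) = a * x by field_simp]
  rw [h]
  refine ⟨i.comp_mul_left' hp.ne', ?_⟩
  rw [Measure.integral_comp_mul_left
      (fun t : ℝ => Real.sin (a / p * t) * Real.sinh (t / 2) / Real.cosh t), e,
    abs_of_pos (by positivity), smul_eq_mul,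
    show π * (a / p) / 2 = π * a / (2 * p) by field_simp, ← mul_div_assoc π a p]
  field_simp

lemma sin_div_cosh_shift_scaled {p : ℝ} (hp : 0 < p) (a b : ℝ) :
    Integrable (fun x : ℝ => Real.sin (a * x) / Real.cosh (p * (x - b) / 2)) ∧
    ∫ x : ℝ, Real.sin (a * x) / Real.cosh (p * (x - b) / 2)
      = 2 * π * Real.sin (a * b) / Real.cosh (π * a / p) / p := by
  obtain ⟨i, e⟩ := sin_shift_div_cosh (2 * a / p) (p * b / 2)
  have h : (fun x : ℝ => Real.sin (a * x) / Real.cosh (p * (x - b) / 2)) =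
      fun x : ℝ => (fun s : ℝ => (fun t : ℝ =>
        Real.sin (2 * a / p * (t + p * b / 2)) / Real.cosh t) (p / 2 * s)) (x - b) := by
    funext x
    simp only
    congr 2 <;> field_simp
    ring
  rw [h]
  refine ⟨(i.comp_mul_left' (by positivity)).comp_sub_right b, ?_⟩
  rw [integral_sub_right_eq_self (fun s : ℝ => (fun t : ℝ =>
        Real.sin (2 * a / p * (t + p * b / 2)) / Real.cosh t) (p / 2 * s)) b,
    Measure.integral_comp_mul_left
      (fun t : ℝ => Real.sin (2 * a / p * (t + p * b / 2)) / Real.cosh t), e, abs_of_pos (by positivity), smul_eq_mul,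
    show π * (2 * a / p) / 2 = π * a / p by field_simp,
    show 2 * a / p * (p * b / 2) = a * b by field_simp]
  field_simp

lemma integral_Ioi_of_even {f : ℝ → ℝ} (hf : ∀ x, f (-x) = f x) :
    ∫ x in Set.Ioi (0 : ℝ), f x = (∫ x, f x) / 2 := by
  have h : (fun x => f |x|) = f := by
    funext x
    rcases abs_choice x with h | h <;> rw [h]
    exact hf x
  have := integral_comp_abs (f := f)
  rw [h] at this
  linarith

lemma inner_integral {p : ℝ} (hp : 0 < p) (a b x : ℝ) :
    ∫ y in Set.Ioi (0:ℝ), Real.sin (x * y) * Real.sin (a * x) * Real.sin (b * y) /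
          (Real.cosh (p * x) * Real.cosh (π * y / p))
      = Real.sin (a * x) / Real.cosh (p * x) * (p / 4 *
        (1 / Real.cosh (p * (x - b) / 2) - 1 / Real.cosh (p * (x + b) / 2))) := by
  obtain ⟨i1, e1⟩ := cos_div_cosh_scaled hp (x - b)
  obtain ⟨i2, e2⟩ := cos_div_cosh_scaled hp (x + b)
  rw [integral_Ioi_of_even]
  · have h : (fun y : ℝ => Real.sin (x * y) * Real.sin (a * x) * Real.sin (b * y) /
          (Real.cosh (p * x) * Real.cosh (π * y / p))) = fun y : ℝ =>
        (Real.sin (a * x) / Real.cosh (p * x) / 2) *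
          (Real.cos ((x - b) * y) / Real.cosh (π * y / p) -
            Real.cos ((x + b) * y) / Real.cosh (π * y / p)) := by
      funext y
      rw [sub_mul, add_mul, Real.cos_sub, Real.cos_add]
      have h1 := (Real.cosh_pos (p * x)).ne'
      have h2 := (Real.cosh_pos (π * y / p)).ne'
      field_simp
      ring
    rw [h, integral_const_mul, integral_sub i1 i2, e1, e2]
    ring
  · intro y
    rw [mul_neg, mul_neg, mul_neg, neg_div, Real.cosh_neg, Real.sin_neg, Real.sin_neg]
    ring

/-- Each `sech (2 u) * sech (u ∓ v)` equals
`(2 cosh (u ± v) / cosh (2 u) - sech (u ∓ v)) / cosh (2 v)`; this is the difference of the two. -/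
lemma partial_fractions (u v : ℝ) :
    1 / Real.cosh (2 * u) * (1 / Real.cosh (u - v) - 1 / Real.cosh (u + v)) =
      (4 * Real.sinh v * (Real.sinh u / Real.cosh (2 * u)) - 1 / Real.cosh (u - v)
        + 1 / Real.cosh (u + v)) / Real.cosh (2 * v) := by
  have h1 := (Real.cosh_pos (2 * u)).ne'
  have h2 := (Real.cosh_pos (2 * v)).ne'
  have h3 := (Real.cosh_pos (u - v)).ne'
  have h4 := (Real.cosh_pos (u + v)).ne'
  field_simp
  have hu := Real.cosh_sq u
  have hv := Real.cosh_sq v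
  rw [Real.cosh_two_mul, Real.cosh_two_mul, Real.cosh_sub, Real.cosh_add]
  generalize Real.cosh u = A at *
  generalize Real.cosh v = B at *
  generalize Real.sinh u = C at *
  generalize Real.sinh v = D at *
  have hA : A ^ 2 = C ^ 2 + 1 := hu
  have hB : B ^ 2 = D ^ 2 + 1 := hv
  ring_nf
  simp only [hA, hB]
  ring

theorem stmt_8 (p : ℝ) (hp : 0 < p) (a b : ℝ) :
    2 / π *
      ∫ x in Set.Ioi (0:ℝ), ∫ y in Set.Ioi (0:ℝ),
        Real.sin (x * y) * Real.sin (a * x) * Real.sin (b * y) /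
          (Real.cosh (p * x) * Real.cosh (π * y / p))
      = Real.sqrt 2 * (Real.sinh (π * a / (2 * p)) * Real.sinh (p * b / 2)) /
          (Real.cosh (π * a / p) * Real.cosh (p * b))
        - Real.sin (a * b) / (Real.cosh (π * a / p) * Real.cosh (p * b)) := by
  simp only [inner_integral hp]
  obtain ⟨i1, e1⟩ := sin_mul_sinh_div_cosh_scaled hp a
  obtain ⟨i2, e2⟩ := sin_div_cosh_shift_scaled hp a b
  obtain ⟨i3, e3⟩ := sin_div_cosh_shift_scaled hp a (-b)
  rw [integral_Ioi_of_even]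
  · have h : (fun x : ℝ => Real.sin (a * x) / Real.cosh (p * x) * (p / 4 *
        (1 / Real.cosh (p * (x - b) / 2) - 1 / Real.cosh (p * (x + b) / 2)))) = fun x : ℝ =>
        (p / 4 / Real.cosh (p * b)) * (4 * Real.sinh (p * b / 2) *
          (Real.sin (a * x) * Real.sinh (p * x / 2) / Real.cosh (p * x))
          - Real.sin (a * x) / Real.cosh (p * (x - b) / 2)
          + Real.sin (a * x) / Real.cosh (p * (x - -b) / 2)) := by
      funext x
      have := partial_fractions (p * x / 2) (p * b / 2)
      rw [show 2 * (p * x / 2) = p * x by ring, show 2 * (p * b / 2) = p * b by ring,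
        show p * x / 2 - p * b / 2 = p * (x - b) / 2 by ring,
        show p * x / 2 + p * b / 2 = p * (x + b) / 2 by ring] at this
      rw [sub_neg_eq_add]
      linear_combination (Real.sin (a * x) * p / 4) * this
    have hI := i1.const_mul (4 * Real.sinh (p * b / 2))
    have hS : Integrable (fun x : ℝ => 4 * Real.sinh (p * b / 2) *
          (Real.sin (a * x) * Real.sinh (p * x / 2) / Real.cosh (p * x))
          - Real.sin (a * x) / Real.cosh (p * (x - b) / 2)) := hI.sub i2
    rw [h, integral_const_mul, integral_add hS i3, integral_sub hI i2,
      integral_const_mul, e1, e2, e3, mul_neg, Real.sin_neg]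
    have h1 := (Real.cosh_pos (p * b)).ne'
    have h2 := (Real.cosh_pos (π * a / p)).ne'
    have hpi := Real.pi_pos.ne'
    field_simp
    ring
  · intro x
    rw [show p * (-x - b) / 2 = -(p * (x + b) / 2) by ring,
      show p * (-x + b) / 2 = -(p * (x - b) / 2) by ring, mul_neg, mul_neg, Real.cosh_neg,
      Real.cosh_neg, Real.cosh_neg, Real.sin_neg]
    ring
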